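/- arXiv:1205.6980 — 3 statements merged into one kernel-verified Lean document; each statement's English description precedes it below -/
import Mathlib

section
/- Let δ ∈ ℤ and let λ be a partition. The map (i,j) ↦ e_δ(λ)_j is a well-defined bijection from the set {(i,j) ∈ ℕ² : 1 ≤ j < i, λ^T_i + λ^T_j − i − j + 2 = δ} onto the set of vertices of L labelled × in the weight diagram x_λ, i.e. onto {n ∈ L : n > 0 and both n and −n occur as entries of e_δ(λ)}. -/
open Polynomial

/-- A partition: a weakly decreasing, finitely supported sequence of naturals λ_1, λ_2, …. -/
structure Ptn where
  toFun : ℕ+ → ℕ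
  antitone' : ∀ i j : ℕ+, i ≤ j → toFun j ≤ toFun i
  finite_support' : ∃ N : ℕ+, ∀ i : ℕ+, N ≤ i → toFun i = 0

namespace Ptn

/-- The transpose partition: λ^T_i = #{k ≥ 1 : λ_k ≥ i}. -/
noncomputable def transpose (p : Ptn) (i : ℕ+) : ℕ :=
  Set.ncard {k : ℕ+ | (i : ℕ) ≤ p.toFun k}

/-- The empty partition. -/
def empty : Ptn where
  toFun := fun _ => 0
  antitone' := fun _ _ _ => le_refl 0
  finite_support' := ⟨1, fun _ _ => rfl⟩

end Ptn

/-- e_δ(λ)_i = λ^T_i − δ/2 − i + 1. -/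
noncomputable def ed (δ : ℤ) (p : Ptn) (i : ℕ+) : ℚ :=
  (p.transpose i : ℚ) - (δ : ℚ) / 2 - ((i : ℕ) : ℚ) + 1

/-- The δ-degree of singularity: #{(i,j) : 1 ≤ i < j, e_δ(λ)_i + e_δ(λ)_j = 0}. -/
noncomputable def degd (δ : ℤ) (p : Ptn) : ℕ :=
  Set.ncard {q : ℕ+ × ℕ+ | q.1 < q.2 ∧ ed δ p q.1 + ed δ p q.2 = 0}

/-- The vertex set L: nonnegative integers if δ is even, {1/2, 3/2, …} if δ is odd. -/
def Lset (δ : ℤ) : Set ℚ :=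
  {n : ℚ | 0 ≤ n ∧ ∃ k : ℤ, n + (δ : ℚ) / 2 = (k : ℚ)}

/-- Vertex n is labelled ∘ in x_λ: no entry of e_δ(λ) has absolute value n. -/
def IsCirc (δ : ℤ) (p : Ptn) (n : ℚ) : Prop := ∀ i : ℕ+, |ed δ p i| ≠ n

/-- Vertex n is labelled × in x_λ: n > 0 and both n and −n occur as entries. -/
def IsTimes (δ : ℤ) (p : Ptn) (n : ℚ) : Prop :=
  0 < n ∧ (∃ i : ℕ+, ed δ p i = n) ∧ (∃ i : ℕ+, ed δ p i = -n)

/-- Vertex n is labelled ∧ in x_λ: n > 0, n occurs as an entry and −n does not. -/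
def IsUp (δ : ℤ) (p : Ptn) (n : ℚ) : Prop :=
  0 < n ∧ (∃ i : ℕ+, ed δ p i = n) ∧ ¬ (∃ i : ℕ+, ed δ p i = -n)

/-- Vertex n is labelled ∨ in x_λ: n > 0, −n occurs and n does not, or n = 0 and 0 occurs. -/
def IsDown (δ : ℤ) (p : Ptn) (n : ℚ) : Prop :=
  (0 < n ∧ (∃ i : ℕ+, ed δ p i = -n) ∧ ¬ (∃ i : ℕ+, ed δ p i = n)) ∨
  (n = 0 ∧ ∃ i : ℕ+, ed δ p i = 0)

/-- q is obtained from p by adding one box, in row k. -/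
def AddBoxAt (p q : Ptn) (k : ℕ+) : Prop :=
  q.toFun k = p.toFun k + 1 ∧ ∀ t : ℕ+, t ≠ k → q.toFun t = p.toFun t

/-- q is obtained from p by removing one box, from row l. -/
def RemoveBoxAt (p q : Ptn) (l : ℕ+) : Prop :=
  q.toFun l + 1 = p.toFun l ∧ ∀ t : ℕ+, t ≠ l → q.toFun t = p.toFun t

/-- A box is addable to p at position (k,i): λ_k + 1 = i and increasing the k-th part
yields a partition. -/
def AddableAt (p : Ptn) (k i : ℕ+) : Prop :=
  p.toFun k + 1 = (i : ℕ) ∧ ∃ q : Ptn, AddBoxAt p q k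

/-- A box is removable from p at position (l,j): λ_l = j and decreasing the l-th part
yields a partition. -/
def RemovableAt (p : Ptn) (l j : ℕ+) : Prop :=
  p.toFun l = (j : ℕ) ∧ ∃ q : Ptn, RemoveBoxAt p q l

/-- Edge of the Young graph: q is obtained from p by adding or removing a single box. -/
def YoungEdge (p q : Ptn) : Prop := (∃ k, AddBoxAt p q k) ∨ (∃ k, AddBoxAt q p k)

/-- d(i,j) = λ_i + λ_j − i − j + 1 if i ≤ j, and −λ^T_i − λ^T_j + i + j − 1 if i > j. -/
noncomputable def dbox (p : Ptn) (i j : ℕ+) : ℤ :=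
  if (i : ℕ) ≤ (j : ℕ) then
    (p.toFun i : ℤ) + (p.toFun j : ℤ) - ((i : ℕ) : ℤ) - ((j : ℕ) : ℤ) + 1
  else
    -(p.transpose i : ℤ) - (p.transpose j : ℤ) + ((i : ℕ) : ℤ) + ((j : ℕ) : ℤ) - 1

/-- Hook length h(i,j) = λ_i − j + λ^T_j − i + 1. -/
noncomputable def hook (p : Ptn) (i j : ℕ+) : ℤ :=
  (p.toFun i : ℤ) - ((j : ℕ) : ℤ) + (p.transpose j : ℤ) - ((i : ℕ) : ℤ) + 1

/-- The King polynomial P_λ(u) = ∏_{(i,j)∈[λ]} (u − 1 + d(i,j)) / h(i,j) ∈ ℚ[u]. -/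
noncomputable def king (p : Ptn) : Polynomial ℚ :=
  ∏ᶠ (q : ℕ+ × ℕ+) (_ : (q.2 : ℕ) ≤ p.toFun q.1),
    Polynomial.C ((hook p q.1 q.2 : ℚ))⁻¹ *
      (Polynomial.X + Polynomial.C ((dbox p q.1 q.2 : ℚ) - 1))

/-- (ρ_δ)_i = −δ/2 − i + 1. -/
def rhod (δ : ℤ) (i : ℕ+) : ℚ := -(δ : ℚ) / 2 - ((i : ℕ) : ℚ) + 1

/-- A sequence is dominant if it is strictly decreasing. -/
def Dominant (x : ℕ+ → ℚ) : Prop := ∀ i j : ℕ+, i < j → x j < x i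

/-- ε_i: the sequence with 1 in position i and 0 elsewhere. -/
def eps (i : ℕ+) : ℕ+ → ℚ := fun j => if j = i then 1 else 0

/-- Two sequences are adjacent if they differ by ±ε_i for some i. -/
def AdjacentSeq (x y : ℕ+ → ℚ) : Prop := ∃ i : ℕ+, y = x + eps i ∨ y = x - eps i

/-- x lies in the connected component of ρ_δ in the dominant part of the lattice graph:
x is dominant and is joined to ρ_δ by a finite chain of pairwise adjacent dominant
sequences. -/
def InComponent (δ : ℤ) (x : ℕ+ → ℚ) : Prop :=
  Dominant x ∧ ∃ (r : ℕ) (c : ℕ → ℕ+ → ℚ),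
    c 0 = rhod δ ∧ c r = x ∧ (∀ t ≤ r, Dominant (c t)) ∧
    ∀ t < r, AdjacentSeq (c t) (c (t + 1))

/-- λ ∈ A_δ: λ is joined to ∅ in the Young graph by a chain of δ-regular partitions. -/
def InAdelta (δ : ℤ) (p : Ptn) : Prop :=
  ∃ (r : ℕ) (c : ℕ → Ptn), c 0 = Ptn.empty ∧ c r = p ∧
    (∀ t ≤ r, degd δ (c t) = degd δ Ptn.empty) ∧
    ∀ t < r, YoungEdge (c t) (c (t + 1))

theorem bijOn_snd_of_strictAnti {ι G : Type*} [LinearOrder ι] [AddCommGroup G] [LinearOrder G]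
    [IsOrderedAddMonoid G] {e : ι → G} (he : StrictAnti e) :
    Set.BijOn (fun q : ι × ι => e q.2) {q | q.2 < q.1 ∧ e q.1 = -e q.2}
      {n | 0 < n ∧ n ∈ Set.range e ∧ -n ∈ Set.range e} := by
  have lt_iff_pos {i j : ι} (h : e i = -e j) : j < i ↔ 0 < e j := by
    rw [← he.lt_iff_gt, h, neg_lt_self_iff]
  refine ⟨?mapsTo, ?injOn, ?surjOn⟩
  case mapsTo =>
    rintro ⟨i, j⟩ ⟨hji, hij⟩
    exact ⟨(lt_iff_pos hij).mp hji, ⟨j, rfl⟩, ⟨i, hij⟩⟩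
  case injOn =>
    rintro ⟨i, j⟩ ⟨-, hij⟩ ⟨i', j'⟩ ⟨-, hij'⟩ (hjj' : e j = e j')
    have hii' : e i = e i' := by rw [hij, hij', hjj']
    exact Prod.ext (he.injective hii') (he.injective hjj')
  case surjOn =>
    rintro _ ⟨hpos, ⟨j, rfl⟩, ⟨i, hij⟩⟩
    exact ⟨(i, j), ⟨(lt_iff_pos hij).mpr hpos, hij⟩, rfl⟩

/-- The sequence `t_i − δ/2 − i + 1` attached to an integer sequence `t`; for `t = λ^T` it is
`e_δ(λ)`. -/
def deltaShift (δ : ℤ) (t : ℕ+ → ℤ) (i : ℕ+) : ℚ :=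
  (t i : ℚ) - (δ : ℚ) / 2 - ((i : ℕ) : ℚ) + 1

section DeltaShift

variable (δ : ℤ) {t : ℕ+ → ℤ}

theorem deltaShift_strictAnti (ht : Antitone t) : StrictAnti (deltaShift δ t) := by
  intro i j hij
  have ht' : (t j : ℚ) ≤ t i := Int.cast_le.mpr (ht hij.le)
  have hij' : ((i : ℕ) : ℚ) < ((j : ℕ) : ℚ) := Nat.cast_lt.mpr hij
  unfold deltaShift
  linarith

theorem deltaShift_eq_neg_iff (i j : ℕ+) :
    deltaShift δ t i = -deltaShift δ t j ↔
      t i + t j - ((i : ℕ) : ℤ) - ((j : ℕ) : ℤ) + 2 = δ := by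
  rw [← @Int.cast_inj ℚ]
  unfold deltaShift
  push_cast
  constructor <;> intro h <;> linarith

theorem deltaShift_mem_Lset {i : ℕ+} (hi : 0 ≤ deltaShift δ t i) : deltaShift δ t i ∈ Lset δ := by
  refine ⟨hi, t i - ((i : ℕ) : ℤ) + 1, ?_⟩
  unfold deltaShift
  push_cast
  ring

end DeltaShift

namespace Ptn

theorem finite_setOf_le_toFun (p : Ptn) {m : ℕ} (hm : 0 < m) : {k : ℕ+ | m ≤ p.toFun k}.Finite := by
  obtain ⟨N, hN⟩ := p.finite_support'
  refine (Set.finite_Iio N).subset fun k (hk : m ≤ p.toFun k) => ?_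
  by_contra hNk
  exact (hm.trans_le hk).ne' (hN k (not_lt.mp hNk))

theorem transpose_antitone (p : Ptn) : Antitone p.transpose := fun i _ hij =>
  Set.ncard_le_ncard (fun _ hk => (PNat.coe_le_coe i _).mpr hij |>.trans hk)
    (p.finite_setOf_le_toFun i.pos)

end Ptn

theorem ed_eq_deltaShift (δ : ℤ) (p : Ptn) : ed δ p = deltaShift δ (fun i => p.transpose i) := by
  ext i
  simp only [ed, deltaShift, Int.cast_natCast]

theorem stmt4_general (δ : ℤ) {t : ℕ+ → ℤ} (ht : Antitone t) :
    Set.BijOn (fun q : ℕ+ × ℕ+ => deltaShift δ t q.2)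
      {q : ℕ+ × ℕ+ | q.2 < q.1 ∧ t q.1 + t q.2 - ((q.1 : ℕ) : ℤ) - ((q.2 : ℕ) : ℤ) + 2 = δ}
      {n : ℚ | n ∈ Lset δ ∧ 0 < n ∧
        (∃ i : ℕ+, deltaShift δ t i = n) ∧ (∃ i : ℕ+, deltaShift δ t i = -n)} := by
  have mem_Lset_of_pos : ∀ n : ℚ, 0 < n ∧ (∃ i, deltaShift δ t i = n) ∧
      (∃ i, deltaShift δ t i = -n) → n ∈ Lset δ := by
    rintro _ ⟨hpos, ⟨i, rfl⟩, -⟩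
    exact deltaShift_mem_Lset δ hpos.le
  simpa only [deltaShift_eq_neg_iff, Set.mem_range, and_iff_right_of_imp (mem_Lset_of_pos _)]
    using bijOn_snd_of_strictAnti (deltaShift_strictAnti δ ht)

/-- (i,j) ↦ e_δ(λ)_j is a bijection from
{(i,j) : 1 ≤ j < i, λ^T_i + λ^T_j − i − j + 2 = δ} onto the ×'s of x_λ. -/
theorem stmt4 (δ : ℤ) (p : Ptn) :
    Set.BijOn (fun q : ℕ+ × ℕ+ => ed δ p q.2)
      {q : ℕ+ × ℕ+ | q.2 < q.1 ∧
        (p.transpose q.1 : ℤ) + (p.transpose q.2 : ℤ)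
          - ((q.1 : ℕ) : ℤ) - ((q.2 : ℕ) : ℤ) + 2 = δ}
      {n : ℚ | n ∈ Lset δ ∧ 0 < n ∧
        (∃ i : ℕ+, ed δ p i = n) ∧ (∃ i : ℕ+, ed δ p i = -n)} := by
  rw [ed_eq_deltaShift]
  exact stmt4_general δ (Nat.mono_cast.comp_antitone p.transpose_antitone)
end

section
/- Let δ ∈ ℤ, m := ⌊δ/2⌋, and set T := m − 1 if δ is even and T := m if δ is odd. Let λ be a partition and let (i,j) satisfy 1 ≤ i ≤ j and −λ_i − λ_j + i + j = δ; put n := λ_i − i + δ/2 (a vertex of L labelled ∘ in x_λ). Then (i,j) belongs to the Young diagram [λ] (equivalently j ≤ λ_i) if and only if #{n' ∈ L : n' < n and n' is labelled × in x_λ} − #{n' ∈ L : n' < n and n' is labelled ∘ in x_λ} > T. -/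
open Polynomial

/-! The entries of `e_δ(λ)` are distinct, so the number of them with absolute value `n` is `0` at a
vertex labelled ∘, `2` at one labelled ×, and `1` at every other vertex. Summing over the vertices
left of `n` turns #× − #∘ into the number of entries in `(-n, n)` minus the number of vertices left
of `n`. By transposition, `e_δ(λ)_l` lies on the left or right of `k - λ_k - δ/2` according to
whether `λ_k < l` or `l ≤ λ_k`; as `n` and `-n` are the values of `k - λ_k - δ/2` at `k = j` and
`k = i`, the entries in `(-n, n)` are those with `λ_j < l ≤ λ_i`. There are `j - λ_j - T - 1`
vertices left of `n`, hence #× − #∘ = `λ_i - j + T + 1`. -/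

section Transpose

variable (p : Ptn)

lemma Ptn.finite_setOf_le_toFun_s7 (l : ℕ+) : {k : ℕ+ | (l : ℕ) ≤ p.toFun k}.Finite := by
  obtain ⟨N, hN⟩ := p.finite_support'
  refine (Set.finite_Iio N).subset fun k (hk : (l : ℕ) ≤ p.toFun k) => ?_
  by_contra hNk
  have := hN k (not_lt.mp hNk)
  have := l.pos
  omega

lemma Ptn.le_transpose_iff (k l : ℕ+) : (k : ℕ) ≤ p.transpose l ↔ (l : ℕ) ≤ p.toFun k := by
  constructor
  · intro hk
    by_contra hl
    have hsub : {t : ℕ+ | (l : ℕ) ≤ p.toFun t} ⊆ Finset.Ico 1 k := by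
      intro t (ht : (l : ℕ) ≤ p.toFun t)
      rw [Finset.coe_Ico]
      exact ⟨one_le, lt_of_not_ge fun hkt => hl (ht.trans (p.antitone' k t hkt))⟩
    have hcard : p.transpose l ≤ k - 1 := by
      have := Set.ncard_le_ncard hsub (Finset.finite_toSet _)
      rwa [Set.ncard_coe_finset, PNat.card_Ico] at this
    have := k.pos
    omega
  · intro hl
    have hsub : (Finset.Icc 1 k : Set ℕ+) ⊆ {t : ℕ+ | (l : ℕ) ≤ p.toFun t} := by
      intro t ht
      rw [Finset.coe_Icc] at ht
      exact hl.trans (p.antitone' t k ht.2)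
    have hcard := Set.ncard_le_ncard hsub (p.finite_setOf_le_toFun_s7 l)
    rwa [Set.ncard_coe_finset, PNat.card_Icc, PNat.one_coe, Nat.add_sub_cancel] at hcard

lemma Ptn.antitone_transpose : Antitone p.transpose := fun _ _ hkl =>
  Set.ncard_le_ncard (fun _ ht => (PNat.coe_le_coe _ _ |>.mpr hkl).trans ht)
    (p.finite_setOf_le_toFun_s7 _)

end Transpose

section Entries

variable (δ : ℤ) (p : Ptn)

lemma ed_eq_intCast_sub (k : ℕ+) :
    ed δ p k = ((p.transpose k - (k : ℕ) + 1 : ℤ) : ℚ) - δ / 2 := by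
  unfold ed
  push_cast
  ring

lemma strictAnti_ed : StrictAnti (ed δ p) := by
  intro k l hkl
  have htr := p.antitone_transpose hkl.le
  have hkl' : (k : ℕ) < l := hkl
  rw [ed_eq_intCast_sub, ed_eq_intCast_sub, sub_lt_sub_iff_right, Int.cast_lt]
  omega

lemma abs_ed_mem_Lset (k : ℕ+) : |ed δ p k| ∈ Lset δ := by
  refine ⟨abs_nonneg _, ?_⟩
  rcases abs_choice (ed δ p k) with h | h <;> rw [h, ed_eq_intCast_sub]
  · exact ⟨_, sub_add_cancel _ _⟩
  · exact ⟨δ - (p.transpose k - (k : ℕ) + 1), by push_cast; ring⟩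

lemma ed_lt_iff (k l : ℕ+) :
    ed δ p l < (((k : ℕ) - p.toFun k : ℤ) : ℚ) - δ / 2 ↔ p.toFun k < l := by
  have := p.le_transpose_iff k l
  rw [ed_eq_intCast_sub, sub_lt_sub_iff_right, Int.cast_lt]
  omega

lemma lt_ed_iff (k l : ℕ+) :
    (((k : ℕ) - p.toFun k : ℤ) : ℚ) - δ / 2 < ed δ p l ↔ (l : ℕ) ≤ p.toFun k := by
  have := p.le_transpose_iff k l
  rw [ed_eq_intCast_sub, sub_lt_sub_iff_right, Int.cast_lt]
  omega

lemma finite_setOf_abs_ed_eq (n : ℚ) : {k | |ed δ p k| = n}.Finite :=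
  ((Set.toFinite {n, -n}).preimage (strictAnti_ed δ p).injective.injOn).subset
    fun _ hk => eq_or_eq_neg_of_abs_eq hk

end Entries

section Vertices

variable (δ : ℤ) (n : ℚ)

lemma Lset_inter_Iio_eq_image :
    Lset δ ∩ Set.Iio n =
      (fun x : ℤ => (x : ℚ) - δ / 2) '' Set.Ico ⌈(δ : ℚ) / 2⌉ ⌈n + (δ : ℚ) / 2⌉ := by
  ext v
  simp only [Lset, Set.mem_inter_iff, Set.mem_ofPred_eq, Set.mem_Iio, Set.mem_image, Set.mem_Ico,
    Int.ceil_le, Int.lt_ceil]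
  constructor
  · rintro ⟨⟨hv, x, hx⟩, hvn⟩
    exact ⟨x, ⟨by linarith, by linarith⟩, by linarith⟩
  · rintro ⟨x, ⟨hδx, hxn⟩, rfl⟩
    exact ⟨⟨by linarith, x, by ring⟩, by linarith⟩

lemma finite_Lset_inter_Iio : (Lset δ ∩ Set.Iio n).Finite := by
  rw [Lset_inter_Iio_eq_image]
  exact (Set.finite_Ico _ _).image _

lemma ncard_Lset_inter_Iio :
    (Lset δ ∩ Set.Iio n).ncard = (⌈n + (δ : ℚ) / 2⌉ - ⌈(δ : ℚ) / 2⌉).toNat := by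
  have hinj : Function.Injective fun x : ℤ => (x : ℚ) - δ / 2 :=
    sub_left_injective.comp Int.cast_injective
  rw [Lset_inter_Iio_eq_image, Set.ncard_image_of_injective _ hinj, ← Finset.coe_Ico,
    Set.ncard_coe_finset, Int.card_Ico]

end Vertices

section Labels

variable {δ : ℤ} {p : Ptn} {n : ℚ}

lemma IsCirc.ncard_abs_ed_eq (h : IsCirc δ p n) : {k | |ed δ p k| = n}.ncard = 0 := by
  have hempty : {k | |ed δ p k| = n} = ∅ := Set.eq_empty_of_forall_notMem h
  rw [hempty, Set.ncard_empty]

lemma IsTimes.ncard_abs_ed_eq (h : IsTimes δ p n) : {k | |ed δ p k| = n}.ncard = 2 := by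
  obtain ⟨hn, ⟨k, hk⟩, l, hl⟩ := h
  rw [Set.ncard_eq_two]
  refine ⟨k, l, fun hkl => ?_, ?_⟩
  · subst hkl
    linarith
  · ext t
    rw [Set.mem_ofPred_eq, abs_eq hn.le, ← hl, ← hk, (strictAnti_ed δ p).injective.eq_iff,
      (strictAnti_ed δ p).injective.eq_iff]
    rfl

lemma ncard_abs_ed_eq_one (hcirc : ¬ IsCirc δ p n) (htimes : ¬ IsTimes δ p n) :
    {k | |ed δ p k| = n}.ncard = 1 := by
  obtain ⟨k, rfl⟩ : ∃ k, |ed δ p k| = n := by simpa [IsCirc] using hcirc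
  rw [Set.ncard_eq_one]
  refine ⟨k, Set.eq_singleton_iff_unique_mem.mpr ⟨rfl, fun l hl => ?_⟩⟩
  by_contra hlk
  have hneg : ed δ p l = -ed δ p k :=
    (abs_eq_abs.mp hl).resolve_left ((strictAnti_ed δ p).injective.ne hlk)
  have hk : ed δ p k ≠ 0 := fun h0 =>
    hlk ((strictAnti_ed δ p).injective (by rw [hneg, h0, neg_zero]))
  refine htimes ⟨abs_pos.mpr hk, ?_⟩
  rcases abs_choice (ed δ p k) with h | h <;> rw [h]
  · exact ⟨⟨k, rfl⟩, l, hneg⟩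
  · exact ⟨⟨l, hneg⟩, k, (neg_neg _).symm⟩

end Labels

section Counting

variable (δ : ℤ) (p : Ptn)

open Classical in
lemma ncard_abs_ed_eq_add_ite_isCirc (n : ℚ) :
    {k | |ed δ p k| = n}.ncard + (if IsCirc δ p n then 1 else 0) =
      (if IsTimes δ p n then 1 else 0) + 1 := by
  by_cases hcirc : IsCirc δ p n
  · have htimes : ¬ IsTimes δ p n := fun h => by
      have := h.ncard_abs_ed_eq.symm.trans hcirc.ncard_abs_ed_eq
      omega
    simp [hcirc, htimes, hcirc.ncard_abs_ed_eq]
  · by_cases htimes : IsTimes δ p n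
    · simp [hcirc, htimes, htimes.ncard_abs_ed_eq]
    · simp [hcirc, htimes, ncard_abs_ed_eq_one hcirc htimes]

lemma ncard_abs_ed_lt_eq_sum (n : ℚ) :
    {k | |ed δ p k| < n}.ncard =
      ∑ v ∈ (finite_Lset_inter_Iio δ n).toFinset, {k | |ed δ p k| = v}.ncard := by
  have hunion : {k | |ed δ p k| < n} = ⋃ v ∈ Lset δ ∩ Set.Iio n, {k | |ed δ p k| = v} := by
    ext k
    simp [abs_ed_mem_Lset]
  have hdisj : (Lset δ ∩ Set.Iio n).PairwiseDisjoint fun v => {k | |ed δ p k| = v} :=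
    fun v _ w _ hvw => Set.disjoint_left.mpr fun k hv hw => hvw (hv.symm.trans hw)
  rw [hunion, (finite_Lset_inter_Iio δ n).ncard_biUnion
    (fun v _ => finite_setOf_abs_ed_eq δ p v) hdisj, finsum_mem_eq_finite_toFinset_sum]

lemma ncard_abs_ed_lt_add_ncard_isCirc (n : ℚ) :
    {k | |ed δ p k| < n}.ncard + {v | v ∈ Lset δ ∧ v < n ∧ IsCirc δ p v}.ncard =
      {v | v ∈ Lset δ ∧ v < n ∧ IsTimes δ p v}.ncard + (Lset δ ∩ Set.Iio n).ncard := by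
  classical
  have hV (Q : ℚ → Prop) : {v | v ∈ Lset δ ∧ v < n ∧ Q v}.ncard =
      ∑ v ∈ (finite_Lset_inter_Iio δ n).toFinset, if Q v then 1 else 0 := by
    rw [← Finset.card_filter, ← Set.ncard_coe_finset]
    congr 1
    ext v
    simp [and_assoc]
  rw [hV, hV, ncard_abs_ed_lt_eq_sum, ← Finset.sum_add_distrib,
    Set.ncard_eq_toFinset_card _ (finite_Lset_inter_Iio δ n), Finset.card_eq_sum_ones,
    ← Finset.sum_add_distrib]
  exact Finset.sum_congr rfl fun v _ => ncard_abs_ed_eq_add_ite_isCirc δ p v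

lemma ncard_abs_ed_lt {i j : ℕ+}
    (hd : -(p.toFun i : ℤ) - p.toFun j + (i : ℕ) + (j : ℕ) = δ) :
    {l | |ed δ p l| < (p.toFun i : ℚ) - (i : ℕ) + δ / 2}.ncard = p.toFun i - p.toFun j := by
  have hpos : (p.toFun i : ℚ) - (i : ℕ) + δ / 2 = ((j : ℕ) - p.toFun j : ℤ) - δ / 2 := by
    rw [← hd]; push_cast; ring
  have hneg : -((p.toFun i : ℚ) - (i : ℕ) + δ / 2) = ((i : ℕ) - p.toFun i : ℤ) - δ / 2 := by
    push_cast; ring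
  have hset : {l | |ed δ p l| < (p.toFun i : ℚ) - (i : ℕ) + δ / 2} =
      PNat.val ⁻¹' Set.Ioc (p.toFun j) (p.toFun i) := by
    ext l
    rw [Set.mem_preimage, Set.mem_Ioc, ← ed_lt_iff δ p j l, ← lt_ed_iff δ p i l, Set.mem_ofPred_eq,
      abs_lt, hneg, hpos, and_comm]
  have hrange : Set.Ioc (p.toFun j) (p.toFun i) ⊆ Set.range PNat.val := fun x hx =>
    ⟨⟨x, Nat.zero_lt_of_lt hx.1⟩, rfl⟩
  rw [hset, Set.ncard_preimage_of_injective_subset_range PNat.coe_injective hrange,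
    ← Finset.coe_Ioc, Set.ncard_coe_finset, Nat.card_Ioc]

theorem ncard_isTimes_sub_ncard_isCirc {i j : ℕ+} (hij : i ≤ j)
    (hd : -(p.toFun i : ℤ) - p.toFun j + (i : ℕ) + (j : ℕ) = δ) :
    ({v | v ∈ Lset δ ∧ v < (p.toFun i : ℚ) - (i : ℕ) + δ / 2 ∧ IsTimes δ p v}.ncard : ℤ) -
        {v | v ∈ Lset δ ∧ v < (p.toFun i : ℚ) - (i : ℕ) + δ / 2 ∧ IsCirc δ p v}.ncard =
      p.toFun i - (j : ℕ) + ⌈(δ : ℚ) / 2⌉ := by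
  have hcount := ncard_abs_ed_lt_add_ncard_isCirc δ p ((p.toFun i : ℚ) - (i : ℕ) + δ / 2)
  have hshift : (p.toFun i : ℚ) - (i : ℕ) + δ / 2 + δ / 2 = ((j : ℕ) - p.toFun j : ℤ) := by
    rw [← hd]; push_cast; ring
  rw [ncard_abs_ed_lt δ p hd, ncard_Lset_inter_Iio, hshift, Int.ceil_intCast] at hcount
  have hparts : p.toFun j ≤ p.toFun i := p.antitone' i j hij
  have hij' : (i : ℕ) ≤ j := hij
  have hceil : ⌈(δ : ℚ) / 2⌉ ≤ (j : ℕ) - p.toFun j := by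
    have h2 : (δ : ℚ) ≤ 2 * ((j : ℕ) - p.toFun j : ℤ) := by
      exact_mod_cast (by omega : δ ≤ 2 * ((j : ℕ) - p.toFun j : ℤ))
    rw [Int.ceil_le]
    linarith
  omega

end Counting

/-- for a ∘ of x_λ coming from the pair (i,j) (with i ≤ j and
−λ_i − λ_j + i + j = δ), the box (i,j) lies in [λ] iff
#(×'s left of n) − #(∘'s left of n) > T, where n = λ_i − i + δ/2. -/
theorem stmt7 (δ m T : ℤ) (hmT : (δ = 2 * m ∧ T = m - 1) ∨ (δ = 2 * m + 1 ∧ T = m))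
    (p : Ptn) (i j : ℕ+) (hij : i ≤ j)
    (hd : -(p.toFun i : ℤ) - (p.toFun j : ℤ) + ((i : ℕ) : ℤ) + ((j : ℕ) : ℤ) = δ) :
    ((j : ℕ) ≤ p.toFun i) ↔
      T < (Set.ncard {n' : ℚ | n' ∈ Lset δ ∧
              n' < (p.toFun i : ℚ) - ((i : ℕ) : ℚ) + (δ : ℚ) / 2 ∧ IsTimes δ p n'} : ℤ)
          - (Set.ncard {n' : ℚ | n' ∈ Lset δ ∧
              n' < (p.toFun i : ℚ) - ((i : ℕ) : ℚ) + (δ : ℚ) / 2 ∧ IsCirc δ p n'} : ℤ) := by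
  have hceil : ⌈(δ : ℚ) / 2⌉ = T + 1 := by
    rcases hmT with ⟨rfl, rfl⟩ | ⟨rfl, rfl⟩ <;> rw [Int.ceil_eq_iff] <;> push_cast <;>
      constructor <;> linarith
  rw [ncard_isTimes_sub_ncard_isCirc δ p hij hd, hceil]
  omega
end

section
/- Let δ ∈ ℤ and let λ be a partition. The King polynomial P_λ(u) = ∏_{(i,j)∈[λ]} (u − 1 + d(i,j))/h(i,j) is a nonzero polynomial in ℚ[u], and the multiplicity of δ as a root of P_λ (the largest k such that (u − δ)^k divides P_λ(u)) equals deg_δ(λ) − deg_δ(∅). -/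
open Polynomial

/-! Put beads on the integers `λ_i - i`; the remaining integers are the holes `j - 1 - λᵀ_j`. With
`s = -δ`, a box on or above the diagonal contributes a root `δ` exactly when its two beads sum to
`s`, a box below the diagonal exactly when its two holes do, and `deg_δ(λ)` counts all pairs of
holes with sum `s`. The below-diagonal boxes cancel, so the claim is that the number of pairs of
holes with sum `s` not coming from a box, minus the number of pairs of beads with sum `s` coming
from a box, does not depend on `λ`. Recording such a pair by its larger member `x`, whether it comes
from a box only depends on the number of beads between `s - x` and `x`, and the positive part of
`x - #{beads strictly between s - x and x}` increases by one at each of these pairs of holes,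
decreases by one at each of these pairs of beads and is constant elsewhere. Its initial value,
corrected by a possible diagonal box, and its value for large `x` do not depend on `λ`. -/

open Finset

section General

lemma sum_indicator_one_eq_ncard {α : Type*} (S : Set α) (I : Finset α) :
    ∑ x ∈ I, S.indicator (1 : α → ℤ) x = ((S ∩ I).ncard : ℤ) := by
  classical
  have hfilter : S ∩ I = ({x ∈ I | x ∈ S} : Finset α) := by
    ext x
    simp [and_comm]
  rw [sum_indicator_eq_sum_filter, hfilter, Set.ncard_coe_finset, card_eq_sum_ones, Nat.cast_sum]
  rfl

lemma rootMultiplicity_prod_X_sub_C {ι R : Type*} [CommRing R] [IsDomain R] [DecidableEq R]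
    (S : Finset ι) (f : ι → R) (a : R) :
    (∏ i ∈ S, (X - C (f i))).rootMultiplicity a = #{i ∈ S | f i = a} := by
  have hroots := roots_multiset_prod_X_sub_C (S.val.map f)
  rw [Multiset.map_map] at hroots
  simp only [Finset.prod, Function.comp_def, ← count_roots] at hroots ⊢
  rw [hroots, Multiset.count_map]
  simp [eq_comm, Finset.card]

lemma sum_indicator_range_of_strictMono {α β : Type*} [LinearOrder α] [LocallyFiniteOrder α]
    [Preorder β] [LocallyFiniteOrder β] {f : α → β} (hf : StrictMono f) (i j : α) :
    ∑ y ∈ Ioc (f i) (f j), (Set.range f).indicator (1 : β → ℤ) y = #(Ioc i j) := by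
  have himage : Set.range f ∩ Set.Ioc (f i) (f j) = f '' Set.Ioc i j := by
    rw [← Set.image_preimage_eq_range_inter]
    congr 1
    ext k
    simp [hf.lt_iff_lt, hf.le_iff_le]
  rw [sum_indicator_one_eq_ncard, coe_Ioc, himage, Set.ncard_image_of_injective _ hf.injective,
    ← coe_Ioc, Set.ncard_coe_finset]

lemma sum_indicator_range_of_strictAnti {α β : Type*} [LinearOrder α] [LocallyFiniteOrder α]
    [Preorder β] [LocallyFiniteOrder β] {f : α → β} (hf : StrictAnti f) (i j : α) :
    ∑ y ∈ Ioc (f j) (f i), (Set.range f).indicator (1 : β → ℤ) y = #(Ico i j) := by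
  have himage : Set.range f ∩ Set.Ioc (f j) (f i) = f '' Set.Ico i j := by
    rw [← Set.image_preimage_eq_range_inter]
    congr 1
    ext k
    simp [hf.lt_iff_gt, hf.le_iff_ge, and_comm]
  rw [sum_indicator_one_eq_ncard, coe_Ioc, himage, Set.ncard_image_of_injective _ hf.injective,
    ← coe_Ico, Set.ncard_coe_finset]

end General

section Window

variable (A : Set ℤ) (s : ℤ)

/-- The number of elements of `A` in the half-open window from `s - x` to `x`. For the bead set of
a partition it tells how far apart in the partition the beads or holes at `s - x` and `x` are. -/
noncomputable def windowCount (x : ℤ) : ℤ := ∑ y ∈ Ioc (s - x) x, A.indicator 1 y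

/-- The potential of the telescoping argument: as `x` increases above `s / 2`, it goes up by one at
the elements of `vacantPairs A s`, down by one at those of `occupiedPairs A s`, and is constant
elsewhere. -/
noncomputable def potential (x : ℤ) : ℤ := max (x - ∑ y ∈ Ioo (s - x) x, A.indicator 1 y) 0

/-- The pairs of elements of `A` with sum `s` that come from a box of the Young diagram if `A` is
the bead set of a partition, each encoded by its larger member. The two members may coincide, as
for a diagonal box. If the members are the `i`-th and the `j`-th bead, then the last condition reads
`j - i ≤ λ_i - i`. -/
def occupiedPairs : Set ℤ := {x | s ≤ 2 * x ∧ x ∈ A ∧ s - x ∈ A ∧ windowCount A s x ≤ x}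

/-- The pairs of distinct elements of the complement of `A` with sum `s` that do not come from a box
of the Young diagram if `A` is the bead set of a partition, each encoded by its larger member. -/
def vacantPairs : Set ℤ := {x | s < 2 * x ∧ x ∉ A ∧ s - x ∉ A ∧ windowCount A s x ≤ x}

variable {A s}

lemma sum_Ioo_eq_windowCount_sub {x : ℤ} (hx : s < 2 * x) :
    ∑ y ∈ Ioo (s - x) x, A.indicator 1 y = windowCount A s x - A.indicator 1 x := by
  rw [windowCount, ← sum_Ioo_add_eq_sum_Ioc (by omega), add_sub_cancel_right]

lemma sum_Ioo_add_one_eq_windowCount_add {x : ℤ} (hx : s ≤ 2 * x) :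
    ∑ y ∈ Ioo (s - (x + 1)) (x + 1), A.indicator 1 y
      = windowCount A s x + A.indicator 1 (s - x) := by
  have hIcc : Ioo (s - (x + 1)) (x + 1) = Icc (s - x) x := by
    ext y; simp only [mem_Ioo, mem_Icc]; omega
  rw [windowCount, hIcc, sum_Ioc_add_eq_sum_Icc (by omega)]

lemma potential_add_one {x : ℤ} (hx : s < 2 * x) :
    potential A s (x + 1)
      = potential A s x + (vacantPairs A s).indicator 1 x - (occupiedPairs A s).indicator 1 x := by
  classical
  rw [potential, potential, sum_Ioo_add_one_eq_windowCount_add hx.le, sum_Ioo_eq_windowCount_sub hx]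
  simp only [Set.indicator_apply, vacantPairs, occupiedPairs, Set.mem_ofPred_eq, hx, hx.le,
    Pi.one_apply]
  by_cases h : x ∈ A <;> by_cases h' : s - x ∈ A <;>
    simp only [h, h', not_true_eq_false, not_false_eq_true, true_and, false_and, if_true,
      if_false] <;> grind

lemma potential_half_add_one :
    potential A s (s / 2 + 1) = max (s / 2 + 1) 0 - (occupiedPairs A s).indicator 1 (s / 2) := by
  classical
  by_cases hs : s ≤ 2 * (s / 2)
  · have hwindow : windowCount A s (s / 2) = 0 := by
      rw [windowCount, Ioc_eq_empty (by omega), sum_empty]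
    have hcenter : s - s / 2 = s / 2 := by omega
    rw [potential, sum_Ioo_add_one_eq_windowCount_add hs]
    simp only [Set.indicator_apply, occupiedPairs, Set.mem_ofPred_eq, hwindow, hcenter, hs,
      Pi.one_apply]
    by_cases h : s / 2 ∈ A <;> simp only [h, true_and, false_and, if_true, if_false] <;> grind
  · have hnotMem : s / 2 ∉ occupiedPairs A s := fun h => hs h.1
    have hempty : Ioo (s - (s / 2 + 1)) (s / 2 + 1) = ∅ := by
      ext y; simp only [mem_Ioo, notMem_empty, iff_false]; omega
    rw [potential, hempty, Set.indicator_of_notMem hnotMem]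
    simp

lemma sum_indicator_vacantPairs_sub_occupiedPairs {M : ℤ} (hM : s / 2 + 1 ≤ M) :
    ∑ x ∈ Ico (s / 2) M, ((vacantPairs A s).indicator 1 x - (occupiedPairs A s).indicator 1 x)
      = potential A s M - max (s / 2 + 1) 0 := by
  induction M, hM using Int.leInduction with
  | base =>
    have hv : s / 2 ∉ vacantPairs A s := fun h => by have := h.1; omega
    rw [Ico_add_one_right_eq_Icc, Icc_self, sum_singleton, potential_half_add_one,
      Set.indicator_of_notMem hv]
    ring
  | succ M hM ih =>
    rw [← sum_Ico_add_eq_sum_Ico_add_one (by omega), ih, potential_add_one (by omega)]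
    ring

theorem ncard_vacantPairs_sub_ncard_occupiedPairs {M : ℤ} (hM : s / 2 + 1 ≤ M)
    (hA : ∀ x, M ≤ x → x ∉ A ∧ s - x ∈ A) :
    ((vacantPairs A s).ncard : ℤ) - (occupiedPairs A s).ncard
      = potential A s M - max (s / 2 + 1) 0 := by
  have hv : vacantPairs A s ⊆ Ico (s / 2) M := fun x hx => by
    have := hx.1
    exact mem_coe.2 (mem_Ico.2 ⟨by omega, by_contra fun h => hx.2.2.1 (hA x (not_lt.1 h)).2⟩)
  have ho : occupiedPairs A s ⊆ Ico (s / 2) M := fun x hx => by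
    have := hx.1
    exact mem_coe.2 (mem_Ico.2 ⟨by omega, by_contra fun h => (hA x (not_lt.1 h)).1 hx.2.1⟩)
  rw [← sum_indicator_vacantPairs_sub_occupiedPairs hM, sum_sub_distrib,
    sum_indicator_one_eq_ncard, sum_indicator_one_eq_ncard, Set.inter_eq_left.2 hv,
    Set.inter_eq_left.2 ho]

end Window

namespace Ptn

variable (p : Ptn)

lemma finite_setOf_le (j : ℕ+) : {k : ℕ+ | (j : ℕ) ≤ p.toFun k}.Finite := by
  obtain ⟨N, hN⟩ := p.finite_support'
  refine (Set.finite_Iio N).subset fun k (hk : (j : ℕ) ≤ p.toFun k) => ?_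
  refine Set.mem_Iio.2 (lt_of_not_ge fun hNk => ?_)
  rw [hN k hNk] at hk
  exact j.ne_zero (Nat.le_zero.1 hk)

lemma le_toFun_iff_le_transpose (i j : ℕ+) :
    (j : ℕ) ≤ p.toFun i ↔ (i : ℕ) ≤ p.transpose j := by
  constructor <;> intro h
  · have hsub : ↑(Icc 1 i) ⊆ {k : ℕ+ | (j : ℕ) ≤ p.toFun k} := fun k hk =>
      h.trans (p.antitone' k i (mem_Icc.1 hk).2)
    have hcard := Set.ncard_le_ncard hsub (p.finite_setOf_le j)
    rwa [Set.ncard_coe_finset, PNat.card_Icc, PNat.one_coe, Nat.add_sub_cancel] at hcard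
  · by_contra hij
    have hsub : {k : ℕ+ | (j : ℕ) ≤ p.toFun k} ⊆ ↑(Ico 1 i) := fun k hk =>
      mem_coe.2 (mem_Ico.2 ⟨one_le, lt_of_not_ge fun hik =>
        hij (le_trans hk (p.antitone' i k hik))⟩)
    have hcard := Set.ncard_le_ncard hsub (finite_toSet _)
    rw [Set.ncard_coe_finset, PNat.card_Ico] at hcard
    have : p.transpose j ≤ i - 1 := hcard
    have := i.pos
    omega

lemma antitone_transpose_s10 : Antitone p.transpose := fun i _ hij =>
  Set.ncard_le_ncard (fun _ hk => le_trans (PNat.coe_le_coe _ _ |>.2 hij) hk) (p.finite_setOf_le i)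

/-- The position `λ_i - i` of the `i`-th bead in the Maya diagram of a partition. -/
def bead (i : ℕ+) : ℤ := p.toFun i - (i : ℕ)

/-- The position `j - 1 - λᵀ_j` of the `j`-th hole in the Maya diagram of a partition; this is
`-(e_δ(λ)_j + δ / 2)`. -/
noncomputable def hole (j : ℕ+) : ℤ := (j : ℕ) - 1 - p.transpose j

lemma strictAnti_bead : StrictAnti p.bead := fun i j hij => by
  have := p.antitone' i j hij.le
  have : (i : ℕ) < j := hij
  unfold bead
  omega

lemma strictMono_hole : StrictMono p.hole := fun i j hij => by
  have := p.antitone_transpose_s10 hij.le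
  have : (i : ℕ) < j := hij
  unfold hole
  omega

lemma bead_lt_toFun_one (i : ℕ+) : p.bead i < p.toFun 1 := by
  have := p.antitone' 1 i one_le
  have := i.pos
  unfold bead
  omega

variable {p} in
lemma mem_range_bead_of_le_neg {k : ℕ+} (hk : p.toFun k = 0) {x : ℤ} (hx : x ≤ -(k : ℕ)) :
    x ∈ Set.range p.bead := by
  have hxk : (k : ℕ) ≤ x.natAbs := by omega
  let i : ℕ+ := ⟨x.natAbs, k.pos.trans_le hxk⟩
  have hi : p.toFun i ≤ p.toFun k := p.antitone' k i hxk
  have hix : (i : ℕ) = x.natAbs := rfl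
  exact ⟨i, by unfold bead; omega⟩

lemma bead_ne_hole (i j : ℕ+) : p.bead i ≠ p.hole j := by
  have := p.le_toFun_iff_le_transpose i j
  unfold bead hole
  omega

lemma exists_bead_le (x : ℤ) : ∃ i, p.bead i ≤ x := by
  obtain ⟨N, hN⟩ := p.finite_support'
  obtain ⟨i, hi⟩ := mem_range_bead_of_le_neg (hN N le_rfl) (min_le_right x _)
  exact ⟨i, hi.trans_le (min_le_left _ _)⟩

lemma mem_range_bead_or_mem_range_hole (x : ℤ) :
    x ∈ Set.range p.bead ∨ x ∈ Set.range p.hole := by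
  obtain ⟨i, hi, hmin⟩ : ∃ i, p.bead i ≤ x ∧ ∀ k < i, ¬ p.bead k ≤ x :=
    ⟨PNat.find (p.exists_bead_le x), PNat.find_spec (p.exists_bead_le x),
      fun _ => PNat.find_min (p.exists_bead_le x)⟩
  rcases hi.eq_or_lt with hi | hi
  · exact .inl ⟨i, hi⟩
  right
  unfold bead at hi hmin
  obtain ⟨j, hj⟩ : ∃ j : ℕ+, (j : ℤ) = x + (i : ℕ) :=
    ⟨⟨(x + (i : ℕ)).toNat, by omega⟩, by simp only [PNat.mk_coe]; omega⟩
  have hle : p.transpose j < i := lt_of_not_ge fun h => by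
    have := (p.le_toFun_iff_le_transpose i j).2 h
    omega
  have hge : (i : ℕ) ≤ p.transpose j + 1 := by
    rcases eq_or_ne i 1 with rfl | hi1
    · simp
    · obtain ⟨k, rfl⟩ := PNat.exists_eq_succ_of_ne_one hi1
      have hk := hmin k (PNat.lt_add_right k 1)
      have := p.le_toFun_iff_le_transpose k j
      rw [PNat.add_coe, PNat.one_coe] at *
      omega
  exact ⟨j, by unfold hole; omega⟩

lemma compl_range_hole : (Set.range p.hole)ᶜ = Set.range p.bead := by
  ext x
  refine ⟨(p.mem_range_bead_or_mem_range_hole x).resolve_right, ?_⟩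
  rintro ⟨i, rfl⟩ ⟨j, hj⟩
  exact p.bead_ne_hole i j hj.symm

lemma windowCount_bead {i j : ℕ+} (hij : i ≤ j) :
    windowCount (Set.range p.bead) (p.bead i + p.bead j) (p.bead i) = (j : ℕ) - (i : ℕ) := by
  rw [windowCount, add_sub_cancel_left, sum_indicator_range_of_strictAnti p.strictAnti_bead,
    PNat.card_Ico, Nat.cast_sub (PNat.coe_le_coe _ _ |>.2 hij)]

lemma windowCount_hole {i j : ℕ+} (hij : i ≤ j) :
    windowCount (Set.range p.bead) (p.hole j + p.hole i) (p.hole j)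
      = p.hole j - p.hole i - ((j : ℕ) - (i : ℕ)) := by
  rw [windowCount, add_sub_cancel_left, ← compl_range_hole, Set.indicator_compl]
  simp only [Pi.sub_apply, Pi.one_apply, sum_sub_distrib]
  rw [sum_indicator_range_of_strictMono p.strictMono_hole, PNat.card_Ioc,
    Nat.cast_sub (PNat.coe_le_coe _ _ |>.2 hij), sum_const, Int.card_Ioc, nsmul_one,
    Int.toNat_of_nonneg (sub_nonneg.2 (p.strictMono_hole.monotone hij))]

/-- The Young diagram, as a set of pairs (row, column). -/
def boxes : Set (ℕ+ × ℕ+) := {q | (q.2 : ℕ) ≤ p.toFun q.1}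

/-- The index pairs on or above the diagonal whose beads sum to `s`. -/
def beadPairs (s : ℤ) : Set (ℕ+ × ℕ+) := {q | q.1 ≤ q.2 ∧ p.bead q.1 + p.bead q.2 = s}

/-- The index pairs below the diagonal whose holes sum to `s`. -/
def holePairs (s : ℤ) : Set (ℕ+ × ℕ+) := {q | q.2 < q.1 ∧ p.hole q.1 + p.hole q.2 = s}

lemma finite_boxes : p.boxes.Finite := by
  refine ((p.finite_setOf_le 1).prod (Set.finite_Iic (Nat.succPNat (p.toFun 1)))).subset ?_
  rintro ⟨i, j⟩ (hij : (j : ℕ) ≤ p.toFun i)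
  refine ⟨le_trans (b := (j : ℕ)) j.pos hij, PNat.coe_le_coe _ _ |>.1 ?_⟩
  exact (hij.trans (p.antitone' 1 i one_le)).trans (Nat.le_succ _)

lemma finite_holePairs (s : ℤ) : (p.holePairs s).Finite := by
  let N : ℕ+ := Nat.succPNat (s.natAbs + 2 * p.transpose 1 + 2)
  have hN : (N : ℕ) = s.natAbs + 2 * p.transpose 1 + 3 := rfl
  refine ((Set.finite_Iic N).prod (Set.finite_Iic N)).subset ?_
  rintro ⟨i, j⟩ ⟨-, hs⟩
  have hi := p.antitone_transpose_s10 (one_le (a := i))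
  have hj := p.antitone_transpose_s10 (one_le (a := j))
  unfold hole at hs
  constructor <;> refine PNat.coe_le_coe _ _ |>.1 ?_ <;> dsimp only at * <;> omega

lemma bijOn_beadPairs (s : ℤ) :
    Set.BijOn (fun q => p.bead q.1) (p.beadPairs s ∩ p.boxes)
      (occupiedPairs (Set.range p.bead) s) := by
  refine ⟨?_, ?_, ?_⟩
  · rintro ⟨i, j⟩ ⟨⟨hij, rfl⟩, hbox⟩
    have hle := p.strictAnti_bead.antitone hij
    refine ⟨by dsimp only at *; omega, ⟨i, rfl⟩, ⟨j, by simp⟩, ?_⟩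
    dsimp only [boxes, Set.mem_ofPred_eq] at *
    rw [p.windowCount_bead hij]
    unfold bead
    omega
  · rintro ⟨i, j⟩ ⟨⟨-, h⟩, -⟩ ⟨i', j'⟩ ⟨⟨-, h'⟩, -⟩ hbead
    obtain rfl : i = i' := p.strictAnti_bead.injective hbead
    obtain rfl : j = j' := p.strictAnti_bead.injective (add_left_cancel (h.trans h'.symm))
    rfl
  · rintro _ ⟨hle, ⟨i, rfl⟩, ⟨j, hj⟩, hwindow⟩
    obtain rfl : p.bead i + p.bead j = s := by omega
    have hij : i ≤ j := p.strictAnti_bead.le_iff_ge.1 (by omega)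
    rw [p.windowCount_bead hij] at hwindow
    refine ⟨(i, j), ⟨⟨hij, rfl⟩, ?_⟩, rfl⟩
    unfold bead at hwindow
    dsimp only [boxes, Set.mem_ofPred_eq]
    omega

lemma bijOn_holePairs (s : ℤ) :
    Set.BijOn (fun q => p.hole q.1) (p.holePairs s \ p.boxes)
      (vacantPairs (Set.range p.bead) s) := by
  refine ⟨?_, ?_, ?_⟩
  · rintro ⟨j, i⟩ ⟨⟨hij, rfl⟩, hbox⟩
    have hlt := p.strictMono_hole hij
    refine ⟨by dsimp only at *; omega, ?_, ?_, ?_⟩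
    · exact fun ⟨k, hk⟩ => p.bead_ne_hole k j hk
    · rintro ⟨k, hk⟩
      exact p.bead_ne_hole k i (by simpa using hk)
    · dsimp only [boxes, Set.mem_ofPred_eq] at *
      rw [p.le_toFun_iff_le_transpose] at hbox
      rw [p.windowCount_hole hij.le]
      unfold hole
      omega
  · rintro ⟨i, j⟩ ⟨⟨-, h⟩, -⟩ ⟨i', j'⟩ ⟨⟨-, h'⟩, -⟩ hhole
    obtain rfl : i = i' := p.strictMono_hole.injective hhole
    obtain rfl : j = j' := p.strictMono_hole.injective (add_left_cancel (h.trans h'.symm))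
    rfl
  · rintro x ⟨hlt, hx, hsx, hwindow⟩
    obtain ⟨j, rfl⟩ := (p.mem_range_bead_or_mem_range_hole x).resolve_left hx
    obtain ⟨i, hi⟩ := (p.mem_range_bead_or_mem_range_hole _).resolve_left hsx
    obtain rfl : p.hole j + p.hole i = s := by omega
    have hij : i < j := p.strictMono_hole.lt_iff_lt.1 (by omega)
    rw [p.windowCount_hole hij.le] at hwindow
    refine ⟨(j, i), ⟨⟨hij, rfl⟩, fun hbox => ?_⟩, rfl⟩
    have := (p.le_toFun_iff_le_transpose j i).1 hbox
    unfold hole at hwindow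
    omega

lemma potential_range_bead {s M : ℤ} {k : ℕ+} (hM : p.toFun 1 ≤ M) (hk : p.toFun k = 0)
    (hsM : M = s + (k : ℕ)) : potential (Set.range p.bead) s M = max (s + 1) 0 := by
  have hsk : s - M = p.bead k := by unfold bead; omega
  have htop : p.bead 1 < M := (p.bead_lt_toFun_one 1).trans_le hM
  have hsum : ∑ y ∈ Ioo (s - M) M, (Set.range p.bead).indicator (1 : ℤ → ℤ) y = (k : ℕ) - 1 := by
    calc ∑ y ∈ Ioo (s - M) M, (Set.range p.bead).indicator (1 : ℤ → ℤ) y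
        = ∑ y ∈ Ioc (p.bead k) (p.bead 1), (Set.range p.bead).indicator (1 : ℤ → ℤ) y := by
          rw [hsk]
          refine (sum_subset (fun y hy => ?_) fun y hy hy' => Set.indicator_of_notMem ?_ _).symm
          · exact mem_Ioo.2 ⟨(mem_Ioc.1 hy).1, (mem_Ioc.1 hy).2.trans_lt htop⟩
          · rintro ⟨i, rfl⟩
            exact hy' (mem_Ioc.2 ⟨(mem_Ioo.1 hy).1, p.strictAnti_bead.antitone one_le⟩)
      _ = (k : ℕ) - 1 := by
          rw [sum_indicator_range_of_strictAnti p.strictAnti_bead, PNat.card_Ico,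
            Nat.cast_sub (PNat.coe_le_coe _ _ |>.2 one_le), PNat.one_coe, Nat.cast_one]
  rw [potential, hsum, hsM]
  congr 1
  ring

theorem ncard_holePairs_sdiff_sub_ncard_beadPairs_inter (s : ℤ) :
    ((p.holePairs s \ p.boxes).ncard : ℤ) - (p.beadPairs s ∩ p.boxes).ncard
      = max (s + 1) 0 - max (s / 2 + 1) 0 := by
  obtain ⟨N, hN⟩ := p.finite_support'
  let k : ℕ+ := N + ⟨p.toFun 1 + 2 * s.natAbs + 1, by omega⟩
  have hkN : (k : ℕ) = N + (p.toFun 1 + 2 * s.natAbs + 1) := rfl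
  have hk : p.toFun k = 0 := hN k (PNat.lt_add_right N _).le
  have hM : p.toFun 1 ≤ s + (k : ℕ) := by omega
  have hstable (x : ℤ) (hx : s + (k : ℕ) ≤ x) :
      x ∉ Set.range p.bead ∧ s - x ∈ Set.range p.bead := by
    refine ⟨?_, mem_range_bead_of_le_neg hk (by omega)⟩
    rintro ⟨i, rfl⟩
    exact (p.bead_lt_toFun_one i).not_ge (hM.trans hx)
  rw [(p.bijOn_holePairs s).ncard_eq, (p.bijOn_beadPairs s).ncard_eq,
    ncard_vacantPairs_sub_ncard_occupiedPairs (by omega) hstable,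
    p.potential_range_bead hM hk rfl]

end Ptn

lemma degd_eq_ncard_holePairs (δ : ℤ) (p : Ptn) : degd δ p = (p.holePairs (-δ)).ncard := by
  have hed (i j : ℕ+) : ed δ p i + ed δ p j = 0 ↔ p.hole j + p.hole i = -δ := by
    rw [← Int.cast_inj (α := ℚ)]
    unfold ed Ptn.hole
    push_cast
    constructor <;> intro h <;> linarith
  have hswap : {q : ℕ+ × ℕ+ | q.1 < q.2 ∧ ed δ p q.1 + ed δ p q.2 = 0}
      = Prod.swap '' p.holePairs (-δ) := by
    simp only [hed, Set.image_swap_eq_preimage_swap]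
    rfl
  rw [degd, hswap, Set.ncard_image_of_injective _ Prod.swap_injective]

lemma hook_pos {p : Ptn} {q : ℕ+ × ℕ+} (hq : q ∈ p.boxes) : 0 < hook p q.1 q.2 := by
  have := (p.le_toFun_iff_le_transpose q.1 q.2).1 hq
  have : (q.2 : ℕ) ≤ p.toFun q.1 := hq
  unfold hook
  omega

lemma setOf_mem_boxes_dbox_eq (δ : ℤ) (p : Ptn) :
    {q ∈ p.boxes | dbox p q.1 q.2 = 1 - δ}
      = p.beadPairs (-δ) ∩ p.boxes ∪ p.holePairs (-δ) ∩ p.boxes := by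
  ext ⟨i, j⟩
  simp only [Set.mem_ofPred_eq, Set.mem_union, Set.mem_inter_iff, Ptn.beadPairs, Ptn.holePairs,
    dbox, Ptn.bead, Ptn.hole, ← PNat.coe_le_coe, ← PNat.coe_lt_coe]
  split_ifs <;> grind

lemma king_eq_C_mul_prod (p : Ptn) :
    king p = C (∏ q ∈ p.finite_boxes.toFinset, ((hook p q.1 q.2 : ℚ))⁻¹)
      * ∏ q ∈ p.finite_boxes.toFinset, (X - C ((1 - dbox p q.1 q.2 : ℤ) : ℚ)) := by
  have hX (q : ℕ+ × ℕ+) : (X + C ((dbox p q.1 q.2 : ℚ) - 1) : ℚ[X])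
      = X - C ((1 - dbox p q.1 q.2 : ℤ) : ℚ) := by
    rw [sub_eq_add_neg X, ← C_neg]
    push_cast
    rw [neg_sub]
  rw [map_prod, ← prod_mul_distrib]
  simp only [← hX]
  exact finprod_mem_eq_finite_toFinset_prod _ p.finite_boxes

lemma prod_inv_hook_ne_zero (p : Ptn) :
    ∏ q ∈ p.finite_boxes.toFinset, ((hook p q.1 q.2 : ℚ))⁻¹ ≠ 0 :=
  prod_ne_zero_iff.2 fun _ hq =>
    inv_ne_zero (Int.cast_ne_zero.2 (hook_pos (p.finite_boxes.mem_toFinset.1 hq)).ne')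

theorem king_ne_zero (p : Ptn) : king p ≠ 0 := by
  rw [king_eq_C_mul_prod]
  exact mul_ne_zero (C_ne_zero.2 (prod_inv_hook_ne_zero p))
    (prod_ne_zero_iff.2 fun _ _ => X_sub_C_ne_zero _)

theorem rootMultiplicity_king (δ : ℤ) (p : Ptn) :
    (king p).rootMultiplicity (δ : ℚ)
      = (p.beadPairs (-δ) ∩ p.boxes).ncard + (p.holePairs (-δ) ∩ p.boxes).ncard := by
  have hdisj : Disjoint (p.beadPairs (-δ) ∩ p.boxes) (p.holePairs (-δ) ∩ p.boxes) :=
    Set.disjoint_left.2 fun _ hb hh => hh.1.1.not_ge hb.1.1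
  have hroots : ({q ∈ p.finite_boxes.toFinset | ((1 - dbox p q.1 q.2 : ℤ) : ℚ) = δ} : Set _)
      = {q ∈ p.boxes | dbox p q.1 q.2 = 1 - δ} := by
    ext q
    simp only [Set.Finite.mem_toFinset, Int.cast_inj, Set.mem_ofPred_eq]
    exact and_congr_right fun _ => by omega
  rw [king_eq_C_mul_prod, ← count_roots, roots_C_mul _ (prod_inv_hook_ne_zero p), count_roots,
    rootMultiplicity_prod_X_sub_C, ← Set.ncard_coe_finset, coe_filter, hroots,
    setOf_mem_boxes_dbox_eq, Set.ncard_union_eq hdisj (p.finite_boxes.inter_of_right _)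
      (p.finite_boxes.inter_of_right _)]

theorem degd_sub_rootMultiplicity_king (δ : ℤ) (p : Ptn) :
    (degd δ p : ℤ) - (king p).rootMultiplicity (δ : ℚ)
      = max (-δ + 1) 0 - max (-δ / 2 + 1) 0 := by
  rw [← p.ncard_holePairs_sdiff_sub_ncard_beadPairs_inter, degd_eq_ncard_holePairs,
    rootMultiplicity_king,
    ← Set.ncard_inter_add_ncard_sdiff_eq_ncard _ p.boxes (p.finite_holePairs (-δ))]
  push_cast
  ring

lemma king_empty : king Ptn.empty = 1 := by
  simp [king, Ptn.empty]

/-- the King polynomial is nonzero and the multiplicity of δ as a root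
of P_λ equals deg_δ(λ) − deg_δ(∅). -/
theorem stmt10 (δ : ℤ) (p : Ptn) :
    king p ≠ 0 ∧
    ((king p).rootMultiplicity (δ : ℚ) : ℤ)
      = (degd δ p : ℤ) - (degd δ Ptn.empty : ℤ) := by
  have hempty : (king Ptn.empty).rootMultiplicity (δ : ℚ) = 0 := by
    rw [king_empty, ← C_1, rootMultiplicity_C]
  have hp := degd_sub_rootMultiplicity_king δ p
  have h0 := degd_sub_rootMultiplicity_king δ Ptn.empty
  rw [hempty, Nat.cast_zero, sub_zero] at h0
  exact ⟨king_ne_zero p, by linarith⟩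
end
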